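/- Let A = Σ_{e=1}^N L_e^T·A_e·L_e and B = Σ_{e=1}^N L_e^T·B_e·L_e be assembled finite element matrices, where each A_e ∈ ℝ^{m×m} is symmetric positive semidefinite and each B_e ∈ ℝ^{m×m} is symmetric positive definite (so that B is symmetric positive definite). Then min_e λ_1(A_e, B_e) ≤ λ_1(A, B) and λ_n(A, B) ≤ max_e λ_m(A_e, B_e). -/

import Mathlib

open Matrix

/-- The eigenvalues of a symmetric real matrix listed in ascending order with multiplicity. -/
noncomputable def sortedEigs {n : ℕ} (M : Matrix (Fin n) (Fin n) ℝ) : Fin n → ℝ :=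
  if h : M.IsHermitian then h.eigenvalues ∘ Tuple.sort h.eigenvalues else 0

-- The generalized eigenvalues `λ_1(A,B) ≤ … ≤ λ_n(A,B)`: the eigenvalues of
-- `B^{-1/2} A B^{-1/2}` in ascending order with multiplicity (`B` positive definite).
open Classical in
open scoped MatrixOrder in
noncomputable def genEigs {n : ℕ} (A B : Matrix (Fin n) (Fin n) ℝ) : Fin n → ℝ :=
  if hB : B.PosDef then sortedEigs ((CFC.sqrt B)⁻¹ * A * (CFC.sqrt B)⁻¹) else 0

/-- The Boolean connectivity matrix `L_e` of an element whose local-to-global map is `σ`: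
its rows are the standard basis vectors of `ℝ^n` selected by `σ`. -/
def elemL {ι : Type*} {n : ℕ} (σ : ι → Fin n) : Matrix ι (Fin n) ℝ :=
  Matrix.of fun i j => if σ i = j then 1 else 0

/-!
Congruence by `B^{-1/2}` turns the extreme generalized eigenvalues into linear matrix inequalities:
for `A` symmetric and `B` positive definite, `c ≤ λ_min(A, B)` iff `c • B ≤ A`, and
`λ_max(A, B) ≤ c` iff `A ≤ c • B`, in the Loewner order. Assembly is linear and monotone for this
order, so a bound `c • B_e ≤ A_e` or `A_e ≤ c • B_e` that holds on every element passes to the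
assembled pair.
-/

open scoped MatrixOrder ComplexOrder Ring

section ConjSqrt

variable {R : Type*} [PartialOrder R] [Ring R] [StarRing R] [TopologicalSpace R]
  [StarOrderedRing R] [Algebra ℝ R] [ContinuousFunctionalCalculus ℝ R IsSelfAdjoint]
  [NonnegSpectrumClass ℝ R] [IsSemitopologicalRing R] {a b c : R}

lemma isSelfAdjoint_conjSqrt (ha : IsSelfAdjoint a) : IsSelfAdjoint (CFC.conjSqrt c a) := by
  have hc : IsSelfAdjoint (CFC.sqrt c) := (CFC.sqrt_nonneg c).isSelfAdjoint
  simpa only [CFC.conjSqrt_apply, hc.star_eq] using ha.conjugate (CFC.sqrt c)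

variable [T2Space R]

lemma conjSqrt_le_conjSqrt_iff (hc : IsStrictlyPositive c) :
    CFC.conjSqrt c a ≤ CFC.conjSqrt c b ↔ a ≤ b := by
  refine ⟨fun h => ?_, fun h => CFC.conjSqrt_monotone h⟩
  simpa only [CFC.conjSqrt_ringInverse_conjSqrt _ _ hc] using
    CFC.conjSqrt_monotone (c := c⁻¹ʳ) h

lemma smul_le_iff_smul_one_le_conjSqrt (hb : IsStrictlyPositive b) (r : ℝ) :
    r • b ≤ a ↔ r • 1 ≤ CFC.conjSqrt b⁻¹ʳ a := by
  rw [← conjSqrt_le_conjSqrt_iff hb.ringInverse, map_smul, CFC.conjSqrt_ringInverse_self b]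

lemma le_smul_iff_conjSqrt_le_smul_one (hb : IsStrictlyPositive b) (r : ℝ) :
    a ≤ r • b ↔ CFC.conjSqrt b⁻¹ʳ a ≤ r • 1 := by
  rw [← conjSqrt_le_conjSqrt_iff hb.ringInverse, map_smul, CFC.conjSqrt_ringInverse_self b]

end ConjSqrt

section ExtremeEigenvalues

variable {n : ℕ}

lemma sortedEigs_monotone (M : Matrix (Fin n) (Fin n) ℝ) : Monotone (sortedEigs M) := by
  unfold sortedEigs
  split_ifs with hM
  · exact Tuple.monotone_sort _
  · exact monotone_const

lemma spectrum_eq_range_sortedEigs {M : Matrix (Fin n) (Fin n) ℝ} (hM : M.IsHermitian) :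
    spectrum ℝ M = Set.range (sortedEigs M) := by
  rw [sortedEigs, dif_pos hM, EquivLike.range_comp, hM.spectrum_real_eq_range_eigenvalues]

lemma smul_one_le_iff_le_sortedEigs_zero {M : Matrix (Fin (n + 1)) (Fin (n + 1)) ℝ}
    (hM : M.IsHermitian) (c : ℝ) : c • 1 ≤ M ↔ c ≤ sortedEigs M 0 := by
  rw [← Algebra.algebraMap_eq_smul_one, algebraMap_le_iff_le_spectrum (R := ℝ) hM,
    spectrum_eq_range_sortedEigs hM, Set.forall_mem_range]
  exact ⟨fun h => h 0, fun h i => h.trans (sortedEigs_monotone M (Fin.zero_le i))⟩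

lemma le_smul_one_iff_sortedEigs_last_le {M : Matrix (Fin (n + 1)) (Fin (n + 1)) ℝ}
    (hM : M.IsHermitian) (c : ℝ) : M ≤ c • 1 ↔ sortedEigs M (Fin.last n) ≤ c := by
  rw [← Algebra.algebraMap_eq_smul_one, le_algebraMap_iff_spectrum_le (R := ℝ) hM,
    spectrum_eq_range_sortedEigs hM, Set.forall_mem_range]
  exact ⟨fun h => h (Fin.last n), fun h i => (sortedEigs_monotone M (Fin.le_last i)).trans h⟩

lemma genEigs_eq_sortedEigs_conjSqrt (A : Matrix (Fin n) (Fin n) ℝ)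
    {B : Matrix (Fin n) (Fin n) ℝ} (hB : B.PosDef) :
    genEigs A B = sortedEigs (CFC.conjSqrt B⁻¹ʳ A) := by
  rw [genEigs, dif_pos hB, CFC.conjSqrt_apply, ← nonsing_inv_eq_ringInverse,
    hB.posSemidef.inv_sqrt]

variable {A B : Matrix (Fin (n + 1)) (Fin (n + 1)) ℝ}

lemma smul_le_iff_le_genEigs_zero (hA : A.IsHermitian) (hB : B.PosDef) (c : ℝ) :
    c • B ≤ A ↔ c ≤ genEigs A B 0 := by
  have hM : (CFC.conjSqrt B⁻¹ʳ A).IsHermitian := isSelfAdjoint_conjSqrt hA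
  rw [genEigs_eq_sortedEigs_conjSqrt A hB,
    smul_le_iff_smul_one_le_conjSqrt hB.isStrictlyPositive,
    smul_one_le_iff_le_sortedEigs_zero hM]

lemma le_smul_iff_genEigs_last_le (hA : A.IsHermitian) (hB : B.PosDef) (c : ℝ) :
    A ≤ c • B ↔ genEigs A B (Fin.last n) ≤ c := by
  have hM : (CFC.conjSqrt B⁻¹ʳ A).IsHermitian := isSelfAdjoint_conjSqrt hA
  rw [genEigs_eq_sortedEigs_conjSqrt A hB,
    le_smul_iff_conjSqrt_le_smul_one hB.isStrictlyPositive,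
    le_smul_one_iff_sortedEigs_last_le hM]

end ExtremeEigenvalues

section Assembly

variable {ι ν R : Type*} {κ : ι → Type*} [Fintype ι] [∀ e, Fintype (κ e)]

/-- The assembled matrix `∑ e, L_eᴴ * K_e * L_e` of the element matrices `K_e` along the
connectivity matrices `L_e`. The element size may depend on `e`, and the `L_e` need not be
Boolean. -/
def assemble [NonUnitalNonAssocSemiring R] [Star R] (L : ∀ e, Matrix (κ e) ν R)
    (K : ∀ e, Matrix (κ e) (κ e) R) : Matrix ν ν R :=
  ∑ e, (L e)ᴴ * K e * L e

lemma assemble_smul [NonUnitalNonAssocSemiring R] [Star R] {S : Type*} [Monoid S]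
    [DistribMulAction S R] [IsScalarTower S R R] [SMulCommClass S R R] (c : S)
    (L : ∀ e, Matrix (κ e) ν R) (K : ∀ e, Matrix (κ e) (κ e) R) :
    assemble L (c • K) = c • assemble L K := by
  simp only [assemble, Pi.smul_apply, Matrix.mul_smul, Matrix.smul_mul, Finset.smul_sum]

lemma assemble_sub [NonUnitalNonAssocRing R] [Star R] (L : ∀ e, Matrix (κ e) ν R)
    (K K' : ∀ e, Matrix (κ e) (κ e) R) :
    assemble L (K - K') = assemble L K - assemble L K' := by
  simp only [assemble, Pi.sub_apply, Matrix.mul_sub, Matrix.sub_mul, Finset.sum_sub_distrib]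

lemma isHermitian_assemble [NonUnitalSemiring R] [StarRing R] (L : ∀ e, Matrix (κ e) ν R)
    {K : ∀ e, Matrix (κ e) (κ e) R} (hK : ∀ e, (K e).IsHermitian) :
    (assemble L K).IsHermitian :=
  isSelfAdjoint_sum _ fun e _ => isHermitian_conjTranspose_mul_mul (L e) (hK e)

lemma star_dotProduct_assemble_mulVec [NonUnitalSemiring R] [StarRing R] [Fintype ν]
    (L : ∀ e, Matrix (κ e) ν R) (K : ∀ e, Matrix (κ e) (κ e) R) (x : ν → R) :
    star x ⬝ᵥ assemble L K *ᵥ x = ∑ e, star (L e *ᵥ x) ⬝ᵥ K e *ᵥ (L e *ᵥ x) := by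
  simp only [assemble, sum_mulVec, dotProduct_sum, star_mulVec, dotProduct_mulVec, vecMul_vecMul]

section Positivity

variable [Ring R] [PartialOrder R] [StarRing R] {K : ∀ e, Matrix (κ e) (κ e) R}

lemma posSemidef_assemble [AddLeftMono R] [Finite ν] (L : ∀ e, Matrix (κ e) ν R)
    (hK : ∀ e, (K e).PosSemidef) : (assemble L K).PosSemidef :=
  posSemidef_sum _ fun e _ => (hK e).conjTranspose_mul_mul_same (L e)

lemma posDef_assemble [IsOrderedAddMonoid R] [Fintype ν] {L : ∀ e, Matrix (κ e) ν R}
    (hL : ∀ x, (∀ e, L e *ᵥ x = 0) → x = 0) (hK : ∀ e, (K e).PosDef) : (assemble L K).PosDef := by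
  refine .of_dotProduct_mulVec_pos (isHermitian_assemble L fun e => (hK e).isHermitian)
    fun x hx => ?_
  obtain ⟨e, he⟩ : ∃ e, L e *ᵥ x ≠ 0 := by
    by_contra! h
    exact hx (hL x h)
  rw [star_dotProduct_assemble_mulVec]
  exact Finset.sum_pos' (fun e _ => (hK e).posSemidef.dotProduct_mulVec_nonneg _)
    ⟨e, Finset.mem_univ e, (hK e).dotProduct_mulVec_pos he⟩

end Positivity

lemma assemble_mono [Finite ν] [RCLike R] (L : ∀ e, Matrix (κ e) ν R)
    {K K' : ∀ e, Matrix (κ e) (κ e) R} (h : ∀ e, K e ≤ K' e) :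
    assemble L K ≤ assemble L K' := by
  rw [Matrix.le_iff, ← assemble_sub]
  exact posSemidef_assemble L h

end Assembly

lemma elemL_mulVec {ι : Type*} {n : ℕ} (σ : ι → Fin n) (x : Fin n → ℝ) :
    elemL σ *ᵥ x = x ∘ σ := by
  ext j
  simp [elemL, mulVec, dotProduct]

lemma eq_zero_of_forall_elemL_mulVec_eq_zero {ι : Type*} {κ : ι → Type*} {n : ℕ}
    {σ : ∀ e, κ e → Fin n} (hcover : ∀ i, ∃ e j, σ e j = i) (x : Fin n → ℝ)
    (hx : ∀ e, elemL (σ e) *ᵥ x = 0) : x = 0 := by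
  ext i
  obtain ⟨e, j, rfl⟩ := hcover i
  simpa only [elemL_mulVec, Function.comp_apply, Pi.zero_apply] using congrFun (hx e) j

theorem assembled_generalized_eigenvalue_bounds_general {ι : Type*} [Fintype ι] [Nonempty ι]
    {m : ι → ℕ} {n : ℕ} {L : ∀ e, Matrix (Fin (m e + 1)) (Fin (n + 1)) ℝ}
    (hL : ∀ x, (∀ e, L e *ᵥ x = 0) → x = 0)
    {Ae Be : ∀ e, Matrix (Fin (m e + 1)) (Fin (m e + 1)) ℝ}
    (hAe : ∀ e, (Ae e).IsHermitian) (hBe : ∀ e, (Be e).PosDef) :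
    (Finset.univ.inf' Finset.univ_nonempty fun e => genEigs (Ae e) (Be e) 0) ≤
        genEigs (assemble L Ae) (assemble L Be) 0 ∧
      genEigs (assemble L Ae) (assemble L Be) (Fin.last n) ≤
        Finset.univ.sup' Finset.univ_nonempty
          fun e => genEigs (Ae e) (Be e) (Fin.last (m e)) := by
  have hA := isHermitian_assemble L hAe
  have hB := posDef_assemble hL hBe
  constructor
  · rw [← smul_le_iff_le_genEigs_zero hA hB, ← assemble_smul]
    refine assemble_mono L fun e => (smul_le_iff_le_genEigs_zero (hAe e) (hBe e) _).2 ?_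
    exact Finset.inf'_le (fun e => genEigs (Ae e) (Be e) 0) (Finset.mem_univ e)
  · rw [← le_smul_iff_genEigs_last_le hA hB, ← assemble_smul]
    refine assemble_mono L fun e => (le_smul_iff_genEigs_last_le (hAe e) (hBe e) _).2 ?_
    exact Finset.le_sup' (fun e => genEigs (Ae e) (Be e) (Fin.last (m e))) (Finset.mem_univ e)

/-- **Element eigenvalue bounds for generalized eigenproblems** (Irons–Treharne / Wathen).
Let `A = Σ_e L_eᵀ·A_e·L_e` and `B = Σ_e L_eᵀ·B_e·L_e` be assembled matrices, with element
matrices `A_e ⪰ 0` symmetric and `B_e ≻ 0` symmetric positive definite, the `L_e` having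
distinct standard basis vectors as rows and every global index occurring in at least one and
at most `p_max` elements. Then
`min_e λ_1(A_e,B_e) ≤ λ_1(A,B)` and `λ_n(A,B) ≤ max_e λ_m(A_e,B_e)`. -/
theorem assembled_generalized_eigenvalue_bounds {N m n pmax : ℕ} (hpmax : 0 < pmax)
    (σ : Fin (N+1) → Fin (m+1) → Fin (n+1))
    (hinj : ∀ e, Function.Injective (σ e))
    (hcover : ∀ i : Fin (n+1), ∃ e j, σ e j = i)
    (hp : ∀ i : Fin (n+1), (Finset.univ.filter fun e => ∃ j, σ e j = i).card ≤ pmax)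
    (Ae Be : Fin (N+1) → Matrix (Fin (m+1)) (Fin (m+1)) ℝ)
    (hAe : ∀ e, (Ae e).PosSemidef) (hBe : ∀ e, (Be e).PosDef)
    (A B : Matrix (Fin (n+1)) (Fin (n+1)) ℝ)
    (hA : A = ∑ e, (elemL (σ e))ᵀ * Ae e * elemL (σ e))
    (hB : B = ∑ e, (elemL (σ e))ᵀ * Be e * elemL (σ e)) :
    (Finset.univ.inf' Finset.univ_nonempty fun e => genEigs (Ae e) (Be e) 0) ≤
        genEigs A B 0 ∧
      genEigs A B (Fin.last n) ≤
        Finset.univ.sup' Finset.univ_nonempty fun e => genEigs (Ae e) (Be e) (Fin.last m) := by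
  simpa only [assemble, conjTranspose_eq_transpose_of_trivial, ← hA, ← hB] using
    assembled_generalized_eigenvalue_bounds_general
      (eq_zero_of_forall_elemL_mulVec_eq_zero hcover) (fun e => (hAe e).isHermitian) hBe
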